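/- For each integer n ≥ 1, the Rudin-Shapiro sequence has a nonempty factor whose least period is exactly n. -/

import Mathlib

/-- `n` is a period of the factor `x[i..j]` of the infinite word `x`:
`x t = x (t+n)` for all `i ≤ t ≤ j - n`. -/
def Period {A : Type*} (x : ℕ → A) (i j n : ℕ) : Prop :=
  ∀ t, i ≤ t → t + n ≤ j → x t = x (t + n)

/-- `n` is a least period of `x`: some nonempty factor `x[i..j]` has
minimal period `n`. -/
def LeastPeriod {A : Type*} (x : ℕ → A) (n : ℕ) : Prop :=
  ∃ i j, i ≤ j ∧ Period x i j n ∧ ∀ m, 0 < m → m < n → ¬ Period x i j m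

/-- The Rudin-Shapiro sequence: number of (possibly overlapping) occurrences
of `11` in the binary expansion of `n`, mod 2. -/
def rudinShapiro (n : ℕ) : ℕ :=
  (((Nat.digits 2 n).zip (Nat.digits 2 n).tail).countP
    (fun p => p.1 == 1 && p.2 == 1)) % 2

namespace RSaux

/-- Boolean version of the sequence. -/
def R (n : ℕ) : Bool := rudinShapiro n == 1

theorem rs_lt (n : ℕ) : rudinShapiro n < 2 := Nat.mod_lt _ (by norm_num)

theorem ne_of_R {a b : ℕ} (h : R a ≠ R b) : rudinShapiro a ≠ rudinShapiro b := by
  intro e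
  exact h (by simp [R, e])

theorem rs_double (n : ℕ) : rudinShapiro (2 * n) = rudinShapiro n := by
  rcases Nat.eq_zero_or_pos n with rfl | h
  · rfl
  · unfold rudinShapiro
    have h1 : Nat.digits 2 (2 * n) = 0 :: Nat.digits 2 n := by
      have := Nat.digits_add_two_add_one 0 (2 * n - 1)
      rw [show 2 * n - 1 + 1 = 2 * n by omega] at this
      rw [this]
      simp
    rw [h1]
    cases hd : Nat.digits 2 n with
    | nil => simp
    | cons a l => simp

theorem rs_double_one (n : ℕ) : rudinShapiro (2 * n + 1) = (rudinShapiro n + n % 2) % 2 := by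
  unfold rudinShapiro
  have h1 : Nat.digits 2 (2 * n + 1) = 1 :: Nat.digits 2 n := by
    have := Nat.digits_add_two_add_one 0 (2 * n)
    rw [this]
    congr 1
    · omega
    · congr 1; omega
  rw [h1]
  rcases Nat.eq_zero_or_pos n with rfl | h
  · simp
  · have h2 : Nat.digits 2 n = n % 2 :: Nat.digits 2 (n / 2) := by
      have := Nat.digits_add_two_add_one 0 (n - 1)
      rw [show n - 1 + 1 = n by omega] at this
      exact this
    rw [h2]
    rcases Nat.mod_two_eq_zero_or_one n with h3 | h3
    · simp [h3]
    · simp [h3]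

def par (n : ℕ) : Bool := n % 2 == 1

theorem R_two (n : ℕ) : R (2 * n) = R n := by simp [R, rs_double]

theorem R_two_one (n : ℕ) : R (2 * n + 1) = xor (R n) (par n) := by
  have := rs_lt n
  unfold R par
  rw [rs_double_one]
  rcases Nat.mod_two_eq_zero_or_one n with h3 | h3 <;>
  interval_cases h : rudinShapiro n <;> simp [h3]

theorem par_even (n : ℕ) : par (2 * n) = false := by simp [par]
theorem par_odd (n : ℕ) : par (2 * n + 1) = true := by simp [par]

/-- Values inside a block of four. -/
def v4 (q v : Bool) (k : ℕ) : Bool :=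
  match k with
  | 0 => v
  | 1 => v
  | 2 => xor v q
  | _ => !(xor v q)

theorem R_four (n k : ℕ) (hk : k < 4) : R (4 * n + k) = v4 (par n) (R n) k := by
  interval_cases k
  · rw [show 4 * n + 0 = 2 * (2 * n) by ring, R_two, R_two]; rfl
  · rw [show 4 * n + 1 = 2 * (2 * n) + 1 by ring, R_two_one, R_two, par_even]; simp [v4]
  · rw [show 4 * n + 2 = 2 * (2 * n + 1) by ring, R_two, R_two_one]; simp [v4]
  · rw [show 4 * n + 3 = 2 * (2 * n + 1) + 1 by ring, R_two_one, R_two_one, par_odd]; simp [v4]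

theorem R_four' (n : ℕ) : R (4 * n) = R n := by
  have := R_four n 0 (by norm_num); simpa [v4] using this

/-- Values inside two consecutive blocks of eight. -/
def b16 (v w v' w' : Bool) (t : ℕ) : Bool :=
  if t < 4 then v4 false v t else if t < 8 then v4 true w (t - 4)
  else if t < 12 then v4 false v' (t - 8) else v4 true w' (t - 12)

theorem R_b16 (k : ℕ) (t : ℕ) (ht : t < 16) :
    R (8 * k + t) = b16 (R (2 * k)) (R (2 * k + 1)) (R (2 * (k + 1))) (R (2 * (k + 1) + 1)) t := by
  unfold b16
  split_ifs with h1 h2 h3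
  · rw [show 8 * k + t = 4 * (2 * k) + t by ring, R_four _ _ h1, par_even]
  · rw [show 8 * k + t = 4 * (2 * k + 1) + (t - 4) by omega, R_four _ _ (by omega), par_odd]
  · rw [show 8 * k + t = 4 * (2 * (k + 1)) + (t - 8) by omega, R_four _ _ (by omega), par_even]
  · rw [show 8 * k + t = 4 * (2 * (k + 1) + 1) + (t - 12) by omega, R_four _ _ (by omega), par_odd]

theorem b16_check : ∀ x < 8, ∀ y < 8, x % 4 ≠ y % 4 → ∀ v w v' w' z s z' s' : Bool,
    ∃ t < 9, b16 v w v' w' (x + t) ≠ b16 z s z' s' (y + t) := by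
  decide +kernel

theorem sync (i m : ℕ) (h : ∀ t < 9, R (i + t) = R (i + t + m)) : m % 4 = 0 := by
  by_contra hm
  obtain ⟨t, ht, hne⟩ := b16_check (i % 8) (Nat.mod_lt _ (by norm_num)) ((i + m) % 8)
    (Nat.mod_lt _ (by norm_num)) (by omega)
    (R (2 * (i / 8))) (R (2 * (i / 8) + 1)) (R (2 * (i / 8 + 1))) (R (2 * (i / 8 + 1) + 1))
    (R (2 * ((i + m) / 8))) (R (2 * ((i + m) / 8) + 1)) (R (2 * ((i + m) / 8 + 1)))
    (R (2 * ((i + m) / 8 + 1) + 1))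
  rw [← R_b16 _ _ (by omega), ← R_b16 _ _ (by omega)] at hne
  apply hne
  have := h t ht
  rw [show 8 * (i / 8) + (i % 8 + t) = i + t by omega,
    show 8 * ((i + m) / 8) + ((i + m) % 8 + t) = i + t + m by omega]
  exact this

/-- No border. -/
def Unb (i j : ℕ) : Prop := ∀ m, 0 < m → i + m ≤ j → ∃ t, i ≤ t ∧ t + m ≤ j ∧ R t ≠ R (t + m)

theorem step (i j i' j' a b : ℕ) (ha : i' + a = 4 * i) (ha4 : a < 4) (hb4 : b < 4)
    (hb : j' = 4 * j + b) (hj : 7 ≤ j')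
    (hU : Unb i j)
    (hs : ∀ k < 8, ∃ s < k + 1, R (i' + s) ≠ R (j' - 7 + (7 - k + s))) : Unb i' j' := by
  intro m hm hmj
  by_cases hlong : i' + m + 8 ≤ j'
  · by_contra hcon
    push Not at hcon
    have h4 : m % 4 = 0 := sync i' m (fun t ht => hcon _ (by omega) (by omega))
    obtain ⟨m', rfl⟩ : ∃ m', m = 4 * m' := ⟨m / 4, by omega⟩
    obtain ⟨t, h1, h2, h3⟩ := hU m' (by omega) (by omega)
    apply h3
    have := hcon (4 * t) (by omega) (by omega)
    rwa [← mul_add, R_four', R_four'] at this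
  · obtain ⟨s, h1, h2⟩ := hs (j' - i' - m) (by omega)
    refine ⟨i' + s, by omega, by omega, ?_⟩
    rwa [show j' - 7 + (7 - (j' - i' - m) + s) = i' + s + m by omega] at h2

/-- `R (i - 1 + t)` in the state `(p, u)`. -/
def lv (p u : Bool) (t : ℕ) : Bool := if t = 0 then xor u p else u

/-- `R (j - 2 + t)` in the state `(p, u)`, for length `c` mod 4. -/
def rv (c : ℕ) (p u : Bool) (t : ℕ) : Bool :=
  if t = 2 then !u else
  match c, p, t with
  | 0, false, 1 => u
  | 1, true, 1 => u
  | 1, false, 0 => u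
  | 2, true, 0 => u
  | _, _, _ => !u

def Good (N : ℕ) (p u : Bool) : Prop :=
  ∃ i j, 2 ≤ i ∧ j + 1 = i + N ∧ par i = p ∧ (∀ t < 3, R (i - 1 + t) = lv p u t) ∧
    (∀ t < 3, R (j - 2 + t) = rv (N % 4) p u t) ∧ Unb i j

/-- parity of `i - 1 + t`. -/
def lp (p : Bool) (t : ℕ) : Bool := if t = 1 then p else !p
/-- parity of `j - 2 + t`. -/
def rp (c : ℕ) (p : Bool) (t : ℕ) : Bool := xor p (if t = 1 then c % 2 == 1 else c % 2 == 0)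

/-- `R (4 i - 4 + t)`. -/
def L12 (p u : Bool) (t : ℕ) : Bool := v4 (lp p (t / 4)) (lv p u (t / 4)) (t % 4)
/-- `R (4 j - 8 + t)`. -/
def R12 (c : ℕ) (p u : Bool) (t : ℕ) : Bool := v4 (rp c p (t / 4)) (rv c p u (t / 4)) (t % 4)

set_option synthInstance.maxHeartbeats 400000 in
set_option synthInstance.maxSize 4000 in
theorem table : ∀ c < 4, ∀ d < 4, ∀ p u : Bool, ∃ g < 2, ∃ a < 4, ∃ b < 4,
    a + b + 4 * g = 3 + c ∧ (a % 2 == 1) = p ∧ ∃ p' u' : Bool,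
    (∀ t < 3, L12 p' u' (3 - a + t) = lv p u t) ∧
    (∀ t < 3, R12 ((d + g) % 4) p' u' (6 + b + t) = rv c p u t) ∧
    (∀ k < 8, ∃ s < k + 1, L12 p' u' (4 - a + s) ≠ R12 ((d + g) % 4) p' u' (1 + b + (7 - k + s))) := by
  decide +kernel

/-- Fast evaluation. -/
def rsF : ℕ → ℕ → Bool
  | 0, _ => false
  | k + 1, n => xor (n % 4 == 3) (rsF k (n / 2))

theorem rsF_eq : ∀ k n, n < 2 ^ k → rsF k n = R n
  | 0, n, h => by
    have : n = 0 := by simpa using h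
    subst this; rfl
  | k + 1, n, h => by
    have ih := rsF_eq k (n / 2) (by rw [pow_succ] at h; omega)
    unfold rsF
    rw [ih]
    rcases Nat.even_or_odd' n with ⟨q, rfl | rfl⟩
    · rw [R_two, show 2 * q / 2 = q by omega]
      have : ¬ (2 * q % 4 = 3) := by omega
      rw [beq_eq_false_iff_ne.mpr this, Bool.false_xor]
    · have e : ((2 * q + 1) % 4 == 3) = par q := by
        unfold par
        rcases Nat.mod_two_eq_zero_or_one q with h | h
        · rw [h, show (2 * q + 1) % 4 = 1 by omega]; rfl
        · rw [h, show (2 * q + 1) % 4 = 3 by omega]; rfl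
      rw [R_two_one, show (2 * q + 1) / 2 = q by omega, e, Bool.xor_comm]

set_option synthInstance.maxHeartbeats 400000 in
set_option synthInstance.maxSize 4000 in
theorem base_table : ∀ N < 24, 6 ≤ N → ∀ p u : Bool, ∃ i < 128, 2 ≤ i ∧ (i % 2 == 1) = p ∧
    (∀ t < 3, rsF 8 (i - 1 + t) = lv p u t) ∧
    (∀ t < 3, rsF 8 (i + N - 1 - 2 + t) = rv (N % 4) p u t) ∧
    (∀ m < N, 0 < m → ∃ t < N - m, rsF 8 (i + t) ≠ rsF 8 (i + t + m)) := by
  decide +kernel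

theorem base_small : ∀ N < 6, 1 ≤ N → ∃ i < 128,
    (∀ m < N, 0 < m → ∃ t < N - m, rsF 8 (i + t) ≠ rsF 8 (i + t + m)) := by
  decide +kernel

theorem unb_of (i j N : ℕ) (hi : i < 128) (hN : N < 24) (hj : j + 1 = i + N)
    (h : ∀ m < N, 0 < m → ∃ t < N - m, rsF 8 (i + t) ≠ rsF 8 (i + t + m)) : Unb i j := by
  intro m hm hmj
  obtain ⟨t, h1, h2⟩ := h m (by omega) hm
  rw [rsF_eq _ _ (by norm_num; omega), rsF_eq _ _ (by norm_num; omega)] at h2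
  exact ⟨i + t, by omega, by omega, h2⟩

theorem good_base (N : ℕ) (h6 : 6 ≤ N) (hN : N < 24) (p u : Bool) : Good N p u := by
  obtain ⟨i, hi, h2, hp, hl, hr, hu⟩ := base_table N hN h6 p u
  refine ⟨i, i + N - 1, h2, by omega, hp, ?_, ?_, unb_of _ _ N hi hN (by omega) hu⟩
  · intro t ht
    rw [← hl t ht, rsF_eq _ _ (by norm_num; omega)]
  · intro t ht
    rw [← hr t ht, rsF_eq _ _ (by norm_num; omega)]

theorem par_eq {a b : ℕ} (h : a % 2 = b % 2) : par a = par b := by simp [par, h]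

theorem par_add (a b : ℕ) : par (a + b) = xor (par a) (par b) := by
  unfold par
  rcases Nat.mod_two_eq_zero_or_one a with h | h <;>
  rcases Nat.mod_two_eq_zero_or_one b with h' | h' <;> simp [Nat.add_mod, h, h']

theorem good_step (N c : ℕ) (hN : 6 ≤ N) (hc : c < 4)
    (ih0 : ∀ p u, Good N p u) (ih1 : ∀ p u, Good (N + 1) p u) (p u : Bool) :
    Good (4 * N + c) p u := by
  obtain ⟨g, hg, a, ha, b, hb, hab, hap, p', u', hl, hr, hk⟩ :=
    table c hc (N % 4) (Nat.mod_lt _ (by norm_num)) p u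
  have ihg : Good (N + g) p' u' := by
    interval_cases g
    · exact ih0 _ _
    · exact ih1 _ _
  obtain ⟨i, j, hi, hj, hp, hL, hR, hU⟩ := ihg
  have e : (N % 4 + g) % 4 = (N + g) % 4 := by omega
  rw [e] at hr hk
  have HL : ∀ t < 12, R (4 * i - 4 + t) = L12 p' u' t := by
    intro t ht
    rw [show 4 * i - 4 + t = 4 * (i - 1 + t / 4) + t % 4 by omega,
      R_four _ _ (Nat.mod_lt _ (by norm_num)), hL _ (by omega)]
    have : par (i - 1 + t / 4) = lp p' (t / 4) := by
      have : t / 4 < 3 := by omega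
      rw [← hp]
      unfold lp par
      split_ifs with h
      · rw [h, show i - 1 + 1 = i by omega]
      · rw [Bool.eq_iff_iff]; simp; omega
    rw [this]; rfl
  have HR : ∀ t < 12, R (4 * j - 8 + t) = R12 ((N + g) % 4) p' u' t := by
    intro t ht
    rw [show 4 * j - 8 + t = 4 * (j - 2 + t / 4) + t % 4 by omega,
      R_four _ _ (Nat.mod_lt _ (by norm_num)), hR _ (by omega)]
    have : par (j - 2 + t / 4) = rp ((N + g) % 4) p' (t / 4) := by
      have h3 : t / 4 < 3 := by omega
      rw [← hp]
      unfold rp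
      split_ifs with h
      · rw [h, show ((N + g) % 4 % 2 == 1) = par (N + g) by unfold par; congr 1; omega,
          ← par_add]
        exact par_eq (by omega)
      · rw [show ((N + g) % 4 % 2 == 0) = par (N + g + 1) by
          unfold par; rw [Bool.eq_iff_iff]; simp; omega, ← par_add]
        exact par_eq (by omega)
    rw [this]; rfl
  refine ⟨4 * i - a, 4 * j + b, by omega, by omega, ?_, ?_, ?_, ?_⟩
  · rw [← hap]
    unfold par
    congr 1
    omega
  · intro t ht
    rw [← hl t ht, ← HL _ (by omega)]
    congr 1; omega
  · intro t ht
    rw [show (4 * N + c) % 4 = c by omega, ← hr t ht, ← HR _ (by omega)]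
    congr 1; omega
  · refine step i j _ _ a b (by omega) ha hb rfl (by omega) hU ?_
    intro k hk8
    obtain ⟨s, hs, hne⟩ := hk k hk8
    refine ⟨s, hs, ?_⟩
    rw [← HL _ (by omega), ← HR _ (by omega)] at hne
    rwa [show 4 * i - 4 + (4 - a + s) = 4 * i - a + s by omega,
      show 4 * j - 8 + (1 + b + (7 - k + s)) = 4 * j + b - 7 + (7 - k + s) by omega] at hne

theorem good_all (N : ℕ) : 6 ≤ N → ∀ p u, Good N p u := by
  induction N using Nat.strong_induction_on with
  | _ N ih =>
    intro h6 p u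
    by_cases hN : N < 24
    · exact good_base N h6 hN p u
    · have := good_step (N / 4) (N % 4) (by omega) (Nat.mod_lt _ (by norm_num))
        (ih _ (by omega) (by omega)) (ih _ (by omega) (by omega)) p u
      rwa [Nat.div_add_mod] at this

theorem exists_unb (N : ℕ) (h : 1 ≤ N) : ∃ i j, j + 1 = i + N ∧ Unb i j := by
  by_cases hN : N < 6
  · obtain ⟨i, hi, hu⟩ := base_small N hN h
    exact ⟨i, i + N - 1, by omega, unb_of _ _ N hi (by omega) (by omega) hu⟩
  · obtain ⟨i, j, _, hj, _, _, _, hU⟩ := good_all N (by omega) true true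
    exact ⟨i, j, hj, hU⟩

end RSaux

theorem rudinShapiro_leastPeriod (n : ℕ) (hn : 1 ≤ n) :
    LeastPeriod rudinShapiro n := by
  obtain ⟨i, j, hj, hU⟩ := RSaux.exists_unb n hn
  refine ⟨i, j, by omega, ?_, ?_⟩
  · intro t h1 h2
    omega
  · intro m hm hmn hP
    obtain ⟨t, h1, h2, h3⟩ := hU m hm (by omega)
    exact RSaux.ne_of_R h3 (hP t h1 h2)
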